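/- Let X and Y be integrable real-valued random variables on a probability space (Ω, 𝓕, P), let η ≥ 0 be a constant, let α ∈ (0,1) and let δ satisfy 0 < δ < min(α, 1−α, 1/2). Then φ_{α−δ}(X) − (2/δ)·E[|X−Y|] ≤ φ_α(Y) ≤ φ_{α+δ}(X) + (2/δ)·E[|X−Y|]. (Unconditional case of the sandwich inequality in the paper's Theorem on the Lipschitz-like property of the cost-of-capital valuation φ.) -/

import Mathlib

open MeasureTheory

/-- Lower quantile function: `q_X(u) = inf {y : P(X ≤ y) ≥ u}` (the paper's `VaR_u(-X)`,
unconditional case). -/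
noncomputable def lowerQuantile {Ω : Type*} [MeasurableSpace Ω] (P : Measure Ω)
    (X : Ω → ℝ) (u : ℝ) : ℝ :=
  sInf {y : ℝ | u ≤ (P {ω | X ω ≤ y}).toReal}

/-- One-step cost-of-capital valuation:
`φ_α(Y) = q_Y(α) - (1/(1+η)) * E[(q_Y(α) - Y)⁺]`. -/
noncomputable def cocValuation {Ω : Type*} [MeasurableSpace Ω] (P : Measure Ω)
    (η α : ℝ) (Y : Ω → ℝ) : ℝ :=
  lowerQuantile P Y α
    - (1 / (1 + η)) * ∫ ω, max (lowerQuantile P Y α - Y ω) 0 ∂P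

lemma aux_cdf {Ω : Type*} [MeasurableSpace Ω] (P : Measure Ω) [IsProbabilityMeasure P]
    (X : Ω → ℝ) (hX : Measurable X) (y : ℝ) :
    (P {ω | X ω ≤ y}).toReal = ProbabilityTheory.cdf (P.map X) y := by
  have := Measure.isProbabilityMeasure_map (μ := P) hX.aemeasurable
  rw [ProbabilityTheory.cdf_eq_real, measureReal_def, Measure.map_apply hX measurableSet_Iic]
  rfl

lemma aux_nonempty {Ω : Type*} [MeasurableSpace Ω] (P : Measure Ω) [IsProbabilityMeasure P]
    (X : Ω → ℝ) (hX : Measurable X) (u : ℝ) (hu : u < 1) :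
    {y : ℝ | u ≤ (P {ω | X ω ≤ y}).toReal}.Nonempty := by
  obtain ⟨y, hy⟩ :=
    ((ProbabilityTheory.tendsto_cdf_atTop (P.map X)).eventually (lt_mem_nhds hu)).exists
  refine ⟨y, ?_⟩
  rw [Set.mem_ofPred_eq, aux_cdf P X hX]
  exact hy.le

lemma aux_bdd {Ω : Type*} [MeasurableSpace Ω] (P : Measure Ω) [IsProbabilityMeasure P]
    (X : Ω → ℝ) (hX : Measurable X) (u : ℝ) (hu : 0 < u) :
    BddBelow {y : ℝ | u ≤ (P {ω | X ω ≤ y}).toReal} := by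
  obtain ⟨y, hy⟩ :=
    ((ProbabilityTheory.tendsto_cdf_atBot (P.map X)).eventually (gt_mem_nhds hu)).exists
  refine ⟨y, fun z hz => ?_⟩
  rw [Set.mem_ofPred_eq, aux_cdf P X hX] at hz
  by_contra! h
  have := ProbabilityTheory.monotone_cdf (P.map X) h.le
  linarith

lemma aux_quantile {Ω : Type*} [MeasurableSpace Ω] (P : Measure Ω) [IsProbabilityMeasure P]
    (X Y : Ω → ℝ) (hXm : Measurable X) (hYm : Measurable Y)
    (hX : Integrable X P) (hY : Integrable Y P) (β δ : ℝ) (hβ : 0 < β) (hδ : 0 < δ)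
    (h1 : β + δ < 1) :
    lowerQuantile P Y β ≤ lowerQuantile P X (β + δ) + (∫ ω, |X ω - Y ω| ∂P) / δ := by
  refine le_of_forall_pos_le_add fun ε hε => ?_
  set D := ∫ ω, |X ω - Y ω| ∂P with hD
  have hD0 : 0 ≤ D := integral_nonneg fun _ => abs_nonneg _
  set s := D / δ + ε with hs
  have hs0 : 0 < s := by positivity
  have hm : s * P.real {ω | s ≤ |X ω - Y ω|} ≤ D :=
    mul_meas_ge_le_integral_of_nonneg (Filter.Eventually.of_forall fun _ => abs_nonneg _)
      (hX.sub hY).abs s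
  have hDs : D ≤ s * δ := by
    have : D / δ * δ = D := div_mul_cancel₀ _ hδ.ne'
    nlinarith
  have hm' : P.real {ω | s ≤ |X ω - Y ω|} ≤ δ := le_of_mul_le_mul_left (hm.trans hDs) hs0
  suffices lowerQuantile P Y β - s ≤ lowerQuantile P X (β + δ) by linarith
  refine le_csInf (aux_nonempty P X hXm _ h1) fun y hy => ?_
  suffices lowerQuantile P Y β ≤ y + s by linarith
  refine csInf_le (aux_bdd P Y hYm _ hβ) ?_
  have hy' : β + δ ≤ P.real {ω | X ω ≤ y} := hy
  change β ≤ P.real {ω | Y ω ≤ y + s}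
  have hsub : {ω | X ω ≤ y} ⊆ {ω | Y ω ≤ y + s} ∪ {ω | s ≤ |X ω - Y ω|} := by
    intro ω hω
    simp only [Set.mem_union, Set.mem_ofPred_eq] at hω ⊢
    by_contra! h
    have := neg_abs_le (X ω - Y ω)
    linarith [h.1, h.2]
  have := (measureReal_mono (μ := P) hsub).trans (measureReal_union_le _ _)
  linarith

lemma aux_upper {Ω : Type*} [MeasurableSpace Ω] (P : Measure Ω) [IsProbabilityMeasure P]
    (X Y : Ω → ℝ) (hXm : Measurable X) (hYm : Measurable Y)
    (hX : Integrable X P) (hY : Integrable Y P) (η : ℝ) (hη : 0 ≤ η)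
    (β δ : ℝ) (hβ : 0 < β) (hδ : 0 < δ) (h1 : β + δ < 1) :
    cocValuation P η β Y ≤ cocValuation P η (β + δ) X + (2 / δ) * ∫ ω, |X ω - Y ω| ∂P := by
  have hq := aux_quantile P X Y hXm hYm hX hY β δ hβ hδ h1
  unfold cocValuation
  set D := ∫ ω, |X ω - Y ω| ∂P with hD
  have hD0 : 0 ≤ D := integral_nonneg fun _ => abs_nonneg _
  set a := lowerQuantile P Y β
  set b := lowerQuantile P X (β + δ)
  set c := 1 / (1 + η) with hc
  have hc0 : 0 ≤ c := by positivity
  have hc1 : c ≤ 1 := by rw [hc, div_le_one (by linarith)]; linarith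
  have hDd : D ≤ D / δ := by rw [le_div_iff₀ hδ]; nlinarith
  have iX : Integrable (fun ω => max (b - X ω) 0) P := ((integrable_const b).sub hX).pos_part
  have iY : Integrable (fun ω => max (a - Y ω) 0) P := ((integrable_const a).sub hY).pos_part
  have iD : Integrable (fun ω => |X ω - Y ω|) P := (hX.sub hY).abs
  -- the key integral comparison
  have key : ∫ ω, max (b - X ω) 0 ∂P ≤ ∫ ω, max (a - Y ω) 0 ∂P + D + max (b - a) 0 := by
    have : ∫ ω, max (b - X ω) 0 ∂P
        ≤ ∫ ω, (max (a - Y ω) 0 + |X ω - Y ω| + max (b - a) 0) ∂P := by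
      refine integral_mono iX ((iY.add iD).add (integrable_const _)) fun ω => ?_
      have h1 := neg_abs_le (X ω - Y ω)
      have h2 := le_max_left (a - Y ω) 0
      have h3 := le_max_right (a - Y ω) 0
      have h4 := le_max_left (b - a) 0
      have h5 := le_max_right (b - a) 0
      have h6 := abs_nonneg (X ω - Y ω)
      exact max_le (by linarith) (by linarith)
    have iS : Integrable (fun ω => max (a - Y ω) 0 + |X ω - Y ω|) P := iY.add iD
    rw [integral_add iS (integrable_const _), integral_add iY iD] at this
    simpa using this
  have h2 : 2 / δ * D = D / δ + D / δ := by ring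
  rw [h2]
  have k := mul_le_mul_of_nonneg_left key hc0
  rcases le_total a b with h | h
  · rw [max_eq_left (by linarith)] at k
    nlinarith
  · rw [max_eq_right (by linarith)] at k
    nlinarith

/-- Unconditional case of the sandwich inequality in the paper's Theorem on the
Lipschitz-like property of the cost-of-capital valuation `φ`:
`φ_{α-δ}(X) - (2/δ)E|X-Y| ≤ φ_α(Y) ≤ φ_{α+δ}(X) + (2/δ)E|X-Y|`. -/
theorem coc_lipschitz_like_sandwich
    {Ω : Type*} [MeasurableSpace Ω] (P : Measure Ω) [IsProbabilityMeasure P]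
    (X Y : Ω → ℝ) (hXm : Measurable X) (hYm : Measurable Y)
    (hX : Integrable X P) (hY : Integrable Y P)
    (η : ℝ) (hη : 0 ≤ η)
    (α δ : ℝ) (hα : α ∈ Set.Ioo (0 : ℝ) 1)
    (hδ : 0 < δ) (hδ' : δ < min α (min (1 - α) (1 / 2))) :
    cocValuation P η (α - δ) X - (2 / δ) * ∫ ω, |X ω - Y ω| ∂P ≤ cocValuation P η α Y ∧
      cocValuation P η α Y ≤ cocValuation P η (α + δ) X + (2 / δ) * ∫ ω, |X ω - Y ω| ∂P := by
  have hd1 : δ < α := hδ'.trans_le (min_le_left _ _)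
  have hd2 : δ < 1 - α := hδ'.trans_le ((min_le_right _ _).trans (min_le_left _ _))
  have hα1 := hα.1
  have hα2 := hα.2
  constructor
  · have := aux_upper P Y X hYm hXm hY hX η hη (α - δ) δ (by linarith) hδ (by linarith)
    simp only [sub_add_cancel, abs_sub_comm (Y _) (X _)] at this
    linarith
  · exact aux_upper P X Y hXm hYm hX hY η hη α δ hα1 hδ (by linarith)
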